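/- For j ∈ {0,1} and every τ in the complex upper half plane, g_{4,j}(τ)² = E_{4,2}(τ) − (−1)ʲ·8·(η(τ)η(4τ)/η(2τ))⁴; moreover g_{4,0}(τ)·g_{4,1}(τ) = E'_{4,2}(τ), and g_{4,j}(−1/(4τ)) = (−1)ʲ·2i·τ·g_{4,j}(τ). -/

import Mathlib

open Complex

/-- `q = exp(2πiτ)`. -/
noncomputable def qq (τ : ℂ) : ℂ := Complex.exp (2 * Real.pi * Complex.I * τ)

/-- `σ_k(n) = Σ_{d ∣ n} d^k`, as a complex number. -/
noncomputable def sigmaC (k n : ℕ) : ℂ := ∑ d ∈ n.divisors, (d : ℂ) ^ k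

/-- Eisenstein series `E₂(τ) = 1 - 24 Σ_{n≥1} σ₁(n) qⁿ`. -/
noncomputable def E₂ (τ : ℂ) : ℂ := 1 - 24 * ∑' n : ℕ, sigmaC 1 (n + 1) * qq τ ^ (n + 1)

/-- Eisenstein series `E₄(τ) = 1 + 240 Σ_{n≥1} σ₃(n) qⁿ`. -/
noncomputable def E₄ (τ : ℂ) : ℂ := 1 + 240 * ∑' n : ℕ, sigmaC 3 (n + 1) * qq τ ^ (n + 1)

/-- Eisenstein series `E₆(τ) = 1 - 504 Σ_{n≥1} σ₅(n) qⁿ`. -/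
noncomputable def E₆ (τ : ℂ) : ℂ := 1 - 504 * ∑' n : ℕ, sigmaC 5 (n + 1) * qq τ ^ (n + 1)

/-- Dedekind eta function `η(τ) = exp(πiτ/12) ∏_{n≥1} (1 - qⁿ)`. -/
noncomputable def η (τ : ℂ) : ℂ :=
  Complex.exp (Real.pi * Complex.I * τ / 12) * ∏' n : ℕ, (1 - qq τ ^ (n + 1))

/-- Theta function `θ(τ) = Σ_{n ∈ ℤ} q^{n²}`. -/
noncomputable def θ (τ : ℂ) : ℂ := ∑' n : ℤ, qq τ ^ (n ^ 2)

/-- The character `χ₋₄`: `χ₋₄(d) = 1, -1, 0` according as `d ≡ 1, 3, 0/2 (mod 4)`. -/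
noncomputable def χ₄ (d : ℕ) : ℂ := if d % 4 = 1 then 1 else if d % 4 = 3 then -1 else 0

/-- The character `χ₋₃`: `χ₋₃(d) = 1, -1, 0` according as `d ≡ 1, 2, 0 (mod 3)`. -/
noncomputable def χ₃ (d : ℕ) : ℂ := if d % 3 = 1 then 1 else if d % 3 = 2 then -1 else 0

/-- `E_{1,-4}(τ) = 1/4 + Σ_{n≥1} (Σ_{d∣n} χ₋₄(d)) qⁿ`. -/
noncomputable def E₁₄ (τ : ℂ) : ℂ :=
  1 / 4 + ∑' n : ℕ, (∑ d ∈ (n + 1).divisors, χ₄ d) * qq τ ^ (n + 1)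

/-- `E_{1,-3}(τ) = 1/6 + Σ_{n≥1} (Σ_{d∣n} χ₋₃(d)) qⁿ`. -/
noncomputable def E₁₃ (τ : ℂ) : ℂ :=
  1 / 6 + ∑' n : ℕ, (∑ d ∈ (n + 1).divisors, χ₃ d) * qq τ ^ (n + 1)

/-- `E_{2,2}(τ) = 2E₂(2τ) - E₂(τ)`. -/
noncomputable def E₂₂ (τ : ℂ) : ℂ := 2 * E₂ (2 * τ) - E₂ τ

/-- `E_{2,4}(τ) = (4E₄(2τ) - E₄(τ))/3`. -/
noncomputable def E₂₄ (τ : ℂ) : ℂ := (4 * E₄ (2 * τ) - E₄ τ) / 3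

/-- `E_{3,2}(τ) = (3E₂(3τ) - E₂(τ))/2`. -/
noncomputable def E₃₂ (τ : ℂ) : ℂ := (3 * E₂ (3 * τ) - E₂ τ) / 2

/-- `E_{3,4}(τ) = (9E₄(3τ) - E₄(τ))/8`. -/
noncomputable def E₃₄ (τ : ℂ) : ℂ := (9 * E₄ (3 * τ) - E₄ τ) / 8

/-- `E_{4,2}(τ) = (4E₂(4τ) - E₂(τ))/3`. -/
noncomputable def E₄₂ (τ : ℂ) : ℂ := (4 * E₂ (4 * τ) - E₂ τ) / 3

/-- `E'_{4,2}(τ) = 4E₂(4τ) - 4E₂(2τ) + E₂(τ)`. -/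
noncomputable def E₄₂' (τ : ℂ) : ℂ := 4 * E₂ (4 * τ) - 4 * E₂ (2 * τ) + E₂ τ

/-- `f_{1,j}(τ) = 2E₂(τ) - ((3+(-1)ʲi√3)/6)E₂(τ/2) - ((3-(-1)ʲi√3)/6)E₂((τ+1)/2)`. -/
noncomputable def f₁ (j : ℕ) (τ : ℂ) : ℂ :=
  2 * E₂ τ - ((3 + (-1 : ℂ) ^ j * Complex.I * Real.sqrt 3) / 6) * E₂ (τ / 2)
    - ((3 - (-1 : ℂ) ^ j * Complex.I * Real.sqrt 3) / 6) * E₂ ((τ + 1) / 2)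

/-- `g_{1,j}(τ) = (3/2)E₂(τ) - (1/4) Σ_{0≤m≤2, m≢j (mod 3)} E₂((τ+m)/3)`. -/
noncomputable def g₁ (j : ℕ) (τ : ℂ) : ℂ :=
  (3 / 2) * E₂ τ -
    (1 / 4) * ∑ m ∈ (Finset.range 3).filter (fun m => ¬ m % 3 = j % 3), E₂ ((τ + m) / 3)

/-- `f_{2,j}(τ) = 4E_{1,-4}(τ) + (-1)ʲ·2i·(E_{1,-4}(τ/2) - E_{1,-4}((τ+1)/2))`. -/
noncomputable def f₂ (j : ℕ) (τ : ℂ) : ℂ :=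
  4 * E₁₄ τ + (-1 : ℂ) ^ j * 2 * Complex.I * (E₁₄ (τ / 2) - E₁₄ ((τ + 1) / 2))

/-- `f_{3,j}(τ) = 6E_{1,-3}(2τ) + (-1)ʲ·i√3·(E_{1,-3}(τ/2) - E_{1,-3}((τ+1)/2))`. -/
noncomputable def f₃ (j : ℕ) (τ : ℂ) : ℂ :=
  6 * E₁₃ (2 * τ) +
    (-1 : ℂ) ^ j * Complex.I * Real.sqrt 3 * (E₁₃ (τ / 2) - E₁₃ ((τ + 1) / 2))

/-- `f_{4,j}(τ) = θ(τ/2 - (-1)ʲ/4)`. -/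
noncomputable def f₄ (j : ℕ) (τ : ℂ) : ℂ := θ (τ / 2 - (-1 : ℂ) ^ j / 4)

/-- `g_{4,j}(τ) = 2θ(2τ)² - θ((τ+j)/2)²`. -/
noncomputable def g₄ (j : ℕ) (τ : ℂ) : ℂ := 2 * θ (2 * τ) ^ 2 - θ ((τ + j) / 2) ^ 2

/-- `E_{3,-3,1}(τ) = -1/9 + Σ_{n≥1} (Σ_{d∣n} d²χ₋₃(d)) qⁿ`. -/
noncomputable def E₃₃₁ (τ : ℂ) : ℂ :=
  -(1 / 9) + ∑' n : ℕ, (∑ d ∈ (n + 1).divisors, (d : ℂ) ^ 2 * χ₃ d) * qq τ ^ (n + 1)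

/-- `E_{3,1,-3}(τ) = Σ_{n≥1} (Σ_{d∣n} d²χ₋₃(n/d)) qⁿ`. -/
noncomputable def E₃₁₃ (τ : ℂ) : ℂ :=
  ∑' n : ℕ, (∑ d ∈ (n + 1).divisors, (d : ℂ) ^ 2 * χ₃ ((n + 1) / d)) * qq τ ^ (n + 1)

section JacobiThetaConstants

/-- The theta constant `Σ exp(πi n² τ)`. -/
noncomputable def thetaThree (τ : ℂ) : ℂ := jacobiTheta₂ 0 τ

/-- The theta constant `Σ (-1)ⁿ exp(πi n² τ)`. -/
noncomputable def thetaFour (τ : ℂ) : ℂ := jacobiTheta₂ (1 / 2) τ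

/-- The theta constant `Σ exp(πi (n + 1/2)² τ)`. -/
noncomputable def thetaTwo (τ : ℂ) : ℂ :=
  cexp (Real.pi * I * τ / 4) * jacobiTheta₂ (τ / 2) τ

/-- Pairs of integers of equal, respectively distinct, parity, parametrized by their half sum and
half difference. -/
noncomputable def parityEquiv : (ℤ × ℤ) ⊕ (ℤ × ℤ) ≃ ℤ × ℤ :=
  Equiv.ofBijective
    (Sum.elim (fun p ↦ (p.1 + p.2, p.1 - p.2)) (fun p ↦ (p.1 + p.2 + 1, p.1 - p.2))) <| by
    constructor
    · rintro (⟨a, b⟩ | ⟨a, b⟩) (⟨c, d⟩ | ⟨c, d⟩) h <;>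
        simp only [Sum.elim_inl, Sum.elim_inr, Prod.mk.injEq] at h
      · obtain ⟨rfl, rfl⟩ : a = c ∧ b = d := by omega
        rfl
      · omega
      · omega
      · obtain ⟨rfl, rfl⟩ : a = c ∧ b = d := by omega
        rfl
    · rintro ⟨m, n⟩
      rcases Int.even_or_odd' (m + n) with ⟨k, hk | hk⟩
      · exact ⟨.inl (k, m - k), by simp; omega⟩
      · exact ⟨.inr (k, m - k - 1), by simp; omega⟩

lemma parityEquiv_inl (a b : ℤ) : parityEquiv (.inl (a, b)) = (a + b, a - b) := rfl

lemma parityEquiv_inr (a b : ℤ) : parityEquiv (.inr (a, b)) = (a + b + 1, a - b) := rfl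

/-- The product of two theta functions of modulus `τ` in terms of the modulus `2τ`. -/
lemma jacobiTheta₂_mul_jacobiTheta₂ (z w : ℂ) {τ : ℂ} (hτ : 0 < τ.im) :
    jacobiTheta₂ z τ * jacobiTheta₂ w τ =
      jacobiTheta₂ (z + w) (2 * τ) * jacobiTheta₂ (z - w) (2 * τ) +
      cexp (2 * Real.pi * I * z + Real.pi * I * τ) *
        (jacobiTheta₂ (z + w + τ) (2 * τ) * jacobiTheta₂ (z - w + τ) (2 * τ)) := by
  have h2 : 0 < (2 * τ).im := by simpa using hτ
  have hs (z : ℂ) {τ : ℂ} (hτ : 0 < τ.im) : Summable fun n ↦ ‖jacobiTheta₂_term n z τ‖ :=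
    ((summable_jacobiTheta₂_term_iff z τ).mpr hτ).norm
  have key (z w : ℂ) := (summable_mul_of_summable_norm (hs z h2) (hs w h2)).hasSum
  simp only [← tsum_mul_tsum_of_summable_norm (hs _ h2) (hs _ h2)] at key
  have hsum := HasSum.sum
    (f := fun p ↦ jacobiTheta₂_term (parityEquiv p).1 z τ * jacobiTheta₂_term (parityEquiv p).2 w τ)
    ((key (z + w) (z - w)).congr_fun ?_)
    (((key (z + w + τ) (z - w + τ)).mul_left
      (cexp (2 * Real.pi * I * z + Real.pi * I * τ))).congr_fun ?_)
  · rw [jacobiTheta₂, jacobiTheta₂, tsum_mul_tsum_of_summable_norm (hs z hτ) (hs w hτ),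
      ← parityEquiv.tsum_eq, hsum.tsum_eq]
    rfl
  · rintro ⟨a, b⟩
    simp only [Function.comp_apply, parityEquiv_inl, jacobiTheta₂_term, ← Complex.exp_add]
    push_cast
    ring_nf
  · rintro ⟨a, b⟩
    simp only [Function.comp_apply, parityEquiv_inr, jacobiTheta₂_term, ← Complex.exp_add]
    push_cast
    ring_nf

lemma jacobiTheta₂_add_one_right (z τ : ℂ) :
    jacobiTheta₂ z (τ + 1) = jacobiTheta₂ (z + 1 / 2) τ := by
  refine tsum_congr fun n ↦ ?_
  obtain ⟨k, hk⟩ := Int.even_mul_succ_self (n - 1)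
  have hk' : (n : ℂ) ^ 2 = n + 2 * k := by
    rw [← Int.cast_pow, show n ^ 2 = n + 2 * k by linarith]
    push_cast
    ring
  rw [jacobiTheta₂_term, jacobiTheta₂_term, Complex.exp_eq_exp_iff_exists_int]
  exact ⟨k, by linear_combination (Real.pi * I) * hk'⟩

lemma thetaThree_add_one (τ : ℂ) : thetaThree (τ + 1) = thetaFour τ := by
  simp [thetaThree, thetaFour, jacobiTheta₂_add_one_right]

lemma thetaFour_add_one (τ : ℂ) : thetaFour (τ + 1) = thetaThree τ := by
  rw [thetaThree, thetaFour, jacobiTheta₂_add_one_right, ← jacobiTheta₂_add_left 0]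
  norm_num

lemma thetaTwo_add_one (τ : ℂ) :
    thetaTwo (τ + 1) = cexp (Real.pi * I / 4) * thetaTwo τ := by
  rw [thetaTwo, thetaTwo, jacobiTheta₂_add_one_right, ← jacobiTheta₂_add_left (τ / 2),
    ← mul_assoc, ← Complex.exp_add]
  ring_nf

lemma thetaThree_sq {τ : ℂ} (hτ : 0 < τ.im) :
    thetaThree τ ^ 2 = thetaThree (2 * τ) ^ 2 + thetaTwo (2 * τ) ^ 2 := by
  rw [sq, thetaThree, jacobiTheta₂_mul_jacobiTheta₂ _ _ hτ, thetaTwo, mul_pow,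
    ← Complex.exp_nat_mul, thetaThree]
  ring_nf

lemma thetaFour_sq {τ : ℂ} (hτ : 0 < τ.im) :
    thetaFour τ ^ 2 = thetaThree (2 * τ) ^ 2 - thetaTwo (2 * τ) ^ 2 := by
  rw [← thetaThree_add_one, thetaThree_sq (by simpa using hτ), mul_add,
    show 2 * τ + 2 * 1 = 2 * τ + 1 + 1 by ring, thetaThree_add_one, thetaFour_add_one,
    thetaTwo_add_one, thetaTwo_add_one, ← mul_assoc, ← Complex.exp_add,
    show Real.pi * I / 4 + Real.pi * I / 4 = Real.pi / 2 * I by ring, Complex.exp_pi_div_two_mul_I,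
    mul_pow, I_sq]
  ring

lemma thetaTwo_sq {τ : ℂ} (hτ : 0 < τ.im) :
    thetaTwo τ ^ 2 = 2 * thetaTwo (2 * τ) * thetaThree (2 * τ) := by
  have h := jacobiTheta₂_add_left' 0 (2 * τ)
  have he : cexp (2 * Real.pi * I * (τ / 2) + Real.pi * I * τ) *
      cexp (-Real.pi * I * (2 * τ + 2 * 0)) = 1 := by
    rw [← Complex.exp_add, Complex.exp_eq_one_iff]
    exact ⟨0, by push_cast; ring⟩
  have he' : cexp (Real.pi * I * τ / 4) ^ 2 = cexp (Real.pi * I * (2 * τ) / 4) := by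
    rw [← Complex.exp_nat_mul]
    ring_nf
  rw [zero_add] at h
  rw [thetaTwo, mul_pow, sq (jacobiTheta₂ _ _), jacobiTheta₂_mul_jacobiTheta₂ _ _ hτ,
    show τ / 2 + τ / 2 + τ = 2 * τ by ring, add_halves, sub_self, zero_add, h, he', thetaTwo,
    thetaThree, mul_div_cancel_left₀ τ (two_ne_zero' ℂ)]
  linear_combination cexp (Real.pi * I * (2 * τ) / 4) * jacobiTheta₂ 0 (2 * τ) *
    jacobiTheta₂ τ (2 * τ) * he

lemma thetaThree_mul_thetaFour {τ : ℂ} (hτ : 0 < τ.im) :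
    thetaThree τ * thetaFour τ = thetaFour (2 * τ) ^ 2 := by
  have h₁ := jacobiTheta₂_add_left' (1 / 2 - τ) (2 * τ)
  rw [show (1 / 2 - τ + 2 * τ : ℂ) = 0 + 1 / 2 + τ by ring,
    show (-Real.pi * I * (2 * τ + 2 * (1 / 2 - τ)) : ℂ) = -(Real.pi * I) by ring,
    Complex.exp_neg, Complex.exp_pi_mul_I, ← jacobiTheta₂_neg_left,
    ← jacobiTheta₂_neg_left (1 / 2 - τ)] at h₁
  have h₂ : jacobiTheta₂ (0 - 1 / 2 + τ) (2 * τ) = 0 := by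
    have h₃ := jacobiTheta₂_neg_left (0 + 1 / 2 + τ) (2 * τ)
    have h₄ := jacobiTheta₂_add_left (0 - 1 / 2 + τ) (2 * τ)
    ring_nf at h₁ h₃ h₄ ⊢
    grind
  rw [thetaThree, thetaFour, thetaFour, jacobiTheta₂_mul_jacobiTheta₂ _ _ hτ, h₂, zero_sub,
    zero_add, jacobiTheta₂_neg_left]
  ring

lemma thetaThree_pow_four {τ : ℂ} (hτ : 0 < τ.im) :
    thetaThree τ ^ 4 = thetaTwo τ ^ 4 + thetaFour τ ^ 4 := by
  linear_combination (thetaThree τ ^ 2 + thetaThree (2 * τ) ^ 2 + thetaTwo (2 * τ) ^ 2) *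
    thetaThree_sq hτ - (thetaFour τ ^ 2 + thetaThree (2 * τ) ^ 2 - thetaTwo (2 * τ) ^ 2) *
    thetaFour_sq hτ - (thetaTwo τ ^ 2 + 2 * thetaTwo (2 * τ) * thetaThree (2 * τ)) * thetaTwo_sq hτ

lemma thetaThree_neg_one_div {τ : ℂ} (hτ : 0 < τ.im) :
    thetaThree (-1 / τ) = (-I * τ) ^ (1 / 2 : ℂ) * thetaThree τ := by
  have h0 : τ ≠ 0 := by rintro rfl; simp at hτ
  have hs : (-I * τ) ^ (1 / 2 : ℂ) ≠ 0 := by simp [cpow_eq_zero_iff, h0]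
  rw [thetaThree, thetaThree, jacobiTheta₂_functional_equation 0 τ]
  field_simp
  simp

lemma thetaFour_neg_one_div {τ : ℂ} (hτ : 0 < τ.im) :
    thetaFour (-1 / τ) = (-I * τ) ^ (1 / 2 : ℂ) * thetaTwo τ := by
  have h0 : τ ≠ 0 := by rintro rfl; simp at hτ
  have hs : (-I * τ) ^ (1 / 2 : ℂ) ≠ 0 := by simp [cpow_eq_zero_iff, h0]
  rw [thetaFour, thetaTwo, jacobiTheta₂_functional_equation (τ / 2) τ,
    show (-Real.pi * I * (τ / 2) ^ 2 / τ : ℂ) = -(Real.pi * I * τ / 4) by field_simp; ring,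
    Complex.exp_neg, show τ / 2 / τ = 1 / 2 by field_simp]
  field_simp [Complex.exp_ne_zero]

lemma thetaTwo_neg_one_div {τ : ℂ} (hτ : 0 < τ.im) :
    thetaTwo (-1 / τ) = (-I * τ) ^ (1 / 2 : ℂ) * thetaFour τ := by
  have h0 : τ ≠ 0 := by rintro rfl; simp at hτ
  have hs : (-I * τ) ^ (1 / 2 : ℂ) ≠ 0 := by simp [cpow_eq_zero_iff, h0]
  rw [thetaFour, thetaTwo, jacobiTheta₂_functional_equation (1 / 2) τ,
    show (-1 / τ / 2 : ℂ) = -(1 / 2 / τ) by ring, jacobiTheta₂_neg_left,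
    show (-Real.pi * I * (1 / 2) ^ 2 / τ : ℂ) = Real.pi * I * (-1 / τ) / 4 by ring]
  field_simp

lemma sqrt_neg_I_mul_sq (τ : ℂ) : ((-I * τ) ^ (1 / 2 : ℂ)) ^ 2 = -I * τ := by
  rw [← Complex.cpow_nat_mul]
  norm_num

end JacobiThetaConstants

section JacobiThetaAnalytic

open Filter Topology

lemma differentiableAt_thetaThree {τ : ℂ} (hτ : 0 < τ.im) : DifferentiableAt ℂ thetaThree τ :=
  differentiableAt_jacobiTheta₂_snd 0 hτ

lemma differentiableAt_thetaFour {τ : ℂ} (hτ : 0 < τ.im) : DifferentiableAt ℂ thetaFour τ :=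
  differentiableAt_jacobiTheta₂_snd (1 / 2) hτ

lemma differentiableAt_thetaTwo {τ : ℂ} (hτ : 0 < τ.im) : DifferentiableAt ℂ thetaTwo τ := by
  have h : DifferentiableAt ℂ (fun τ : ℂ ↦ jacobiTheta₂ (τ / 2) τ) τ :=
    DifferentiableAt.comp (g := fun p : ℂ × ℂ ↦ jacobiTheta₂ p.1 p.2) (f := fun τ : ℂ ↦ (τ / 2, τ))
      τ (hasFDerivAt_jacobiTheta₂ (τ / 2) hτ).differentiableAt (by fun_prop)
  unfold thetaTwo
  fun_prop

lemma tendsto_thetaThree : Tendsto thetaThree (comap im atTop) (𝓝 1) := by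
  have h : Tendsto (fun τ : ℂ ↦ Real.exp (-Real.pi * τ.im)) (comap im atTop) (𝓝 0) :=
    Real.tendsto_exp_atBot.comp
      (tendsto_comap.const_mul_atTop_of_neg (neg_lt_zero.mpr Real.pi_pos))
  simpa [thetaThree, Function.comp_def, jacobiTheta_eq_jacobiTheta₂] using!
    (isBigO_at_im_infty_jacobiTheta_sub_one.trans_tendsto h).add_const 1

lemma tendsto_thetaFour : Tendsto thetaFour (comap im atTop) (𝓝 1) := by
  simp_rw [funext fun τ ↦ (thetaThree_add_one τ).symm]
  exact tendsto_thetaThree.comp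
    (tendsto_comap_iff.mpr (by simpa [Function.comp_def] using tendsto_comap))

lemma tendsto_jacobiTheta₂_half :
    Tendsto (fun τ : ℂ ↦ jacobiTheta₂ (τ / 2) τ) (comap im atTop) (𝓝 2) := by
  have hsq (n : ℤ) : 0 ≤ (n : ℝ) * (n + 1) := by
    rcases le_or_gt 0 n with h | h
    · positivity
    · have : (n : ℝ) + 1 ≤ 0 := by exact_mod_cast h
      nlinarith
  have hn (n : ℤ) (τ : ℂ) : ‖jacobiTheta₂_term n (τ / 2) τ‖ =
      Real.exp (-(Real.pi * (n * (n + 1))) * τ.im) := by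
    rw [norm_jacobiTheta₂_term]
    simp
    ring
  have hlim : ∑' n : ℤ, (if n ∈ ({0, -1} : Finset ℤ) then (1 : ℂ) else 0) = 2 := by
    rw [tsum_eq_sum (s := {0, -1}) (by simp +contextual), Finset.sum_pair (by norm_num)]
    norm_num
  suffices Tendsto (fun τ : ℂ ↦ ∑' n, jacobiTheta₂_term n (τ / 2) τ) (comap im atTop)
      (𝓝 (∑' n : ℤ, if n ∈ ({0, -1} : Finset ℤ) then (1 : ℂ) else 0)) by rwa [hlim] at this
  refine tendsto_tsum_of_dominated_convergence (bound := fun n ↦ ‖jacobiTheta₂_term n (I / 2) I‖)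
    ((summable_jacobiTheta₂_term_iff _ _).mpr (by simp)).norm (fun n ↦ ?_) ?_
  · split_ifs with h
    · refine tendsto_const_nhds.congr fun τ ↦ ?_
      have : (n : ℂ) = 0 ∨ (n : ℂ) = -1 := by
        simp only [Finset.mem_insert, Finset.mem_singleton] at h
        exact_mod_cast h
      rw [jacobiTheta₂_term, eq_comm, Complex.exp_eq_one_iff]
      rcases this with h | h
      · exact ⟨0, by simp [h]⟩
      · exact ⟨0, by simp [h]; ring⟩
    · rw [tendsto_zero_iff_norm_tendsto_zero]
      simp_rw [hn]
      refine Real.tendsto_exp_atBot.comp (tendsto_comap.const_mul_atTop_of_neg ?_)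
      have h0 : (n : ℝ) * (n + 1) ≠ 0 := by
        simp only [Finset.mem_insert, Finset.mem_singleton, not_or] at h
        refine mul_ne_zero (by exact_mod_cast h.1) ?_
        have : n + 1 ≠ 0 := by omega
        exact_mod_cast this
      have := mul_pos Real.pi_pos (lt_of_le_of_ne (hsq n) h0.symm)
      linarith
  · filter_upwards [tendsto_comap.eventually_ge_atTop 1] with τ hτ n
    rw [hn, hn, Real.exp_le_exp, I_im]
    nlinarith [mul_nonneg Real.pi_pos.le (hsq n)]

end JacobiThetaAnalytic

section EtaQuotient

open UpperHalfPlane hiding I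
open Filter Topology ModularGroup
open scoped MatrixGroups ModularForm

/-- The product of the three theta constants, which is `2η³`. -/
noncomputable def thetaProd (τ : ℂ) : ℂ := thetaTwo τ * thetaThree τ * thetaFour τ

lemma thetaProd_pow_eight_add_one (τ : ℂ) : thetaProd (τ + 1) ^ 8 = thetaProd τ ^ 8 := by
  have h : cexp (Real.pi * I / 4) ^ 8 = 1 := by
    rw [← Complex.exp_nat_mul, Complex.exp_eq_one_iff]
    exact ⟨1, by push_cast; ring⟩
  simp only [thetaProd, thetaThree_add_one, thetaFour_add_one, thetaTwo_add_one, mul_pow, h]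
  ring

lemma thetaProd_pow_eight_neg_one_div {τ : ℂ} (hτ : 0 < τ.im) :
    thetaProd (-1 / τ) ^ 8 = τ ^ 12 * thetaProd τ ^ 8 := by
  have h : ((-I * τ) ^ (1 / 2 : ℂ)) ^ 24 = τ ^ 12 := by
    rw [show 24 = 2 * 12 from rfl, pow_mul, sqrt_neg_I_mul_sq, mul_pow, neg_pow, I_pow_eq_pow_mod]
    norm_num
  rw [thetaProd, thetaThree_neg_one_div hτ, thetaFour_neg_one_div hτ, thetaTwo_neg_one_div hτ,
    thetaProd, ← h]
  ring

lemma tendsto_thetaProd_pow_eight :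
    Tendsto (fun τ : ℂ ↦ cexp (-(2 * Real.pi * I * τ)) * thetaProd τ ^ 8) (comap im atTop)
      (𝓝 256) := by
  have h := ((tendsto_jacobiTheta₂_half.mul tendsto_thetaThree).mul tendsto_thetaFour).pow 8
  norm_num at h
  refine h.congr fun τ ↦ ?_
  have he : cexp (Real.pi * I * τ / 4) ^ 8 = cexp (2 * Real.pi * I * τ) := by
    rw [← Complex.exp_nat_mul]
    push_cast
    ring_nf
  simp only [thetaProd, thetaTwo, mul_pow, he, Complex.exp_neg]
  field_simp [Complex.exp_ne_zero]

lemma differentiableAt_thetaProd {τ : ℂ} (hτ : 0 < τ.im) : DifferentiableAt ℂ thetaProd τ :=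
  ((differentiableAt_thetaTwo hτ).mul (differentiableAt_thetaThree hτ)).mul
    (differentiableAt_thetaFour hτ)

lemma slash_S_thetaProd_pow_eight :
    ((fun τ : ℍ ↦ thetaProd τ ^ 8) ∣[(12 : ℤ)] S) = fun τ : ℍ ↦ thetaProd τ ^ 8 := by
  ext τ
  rw [ModularForm.SL_slash_apply, modular_S_smul, denom_S]
  have h := thetaProd_pow_eight_neg_one_div τ.2
  have h0 := τ.ne_zero
  simp only [inv_neg]
  rw [show -(τ : ℂ)⁻¹ = -1 / τ by ring, h, zpow_neg]
  norm_cast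
  field_simp

lemma slash_T_thetaProd_pow_eight :
    ((fun τ : ℍ ↦ thetaProd τ ^ 8) ∣[(12 : ℤ)] T) = fun τ : ℍ ↦ thetaProd τ ^ 8 := by
  ext τ
  rw [ModularForm.SL_slash_apply, modular_T_smul]
  have hd : denom T τ = 1 := by rw [denom_apply]; simp [T]
  rw [hd, one_zpow, mul_one, coe_vadd, add_comm]
  exact_mod_cast thetaProd_pow_eight_add_one τ

lemma isZeroAtImInfty_thetaProd_pow_eight : IsZeroAtImInfty fun τ : ℍ ↦ thetaProd τ ^ 8 := by
  have h := (UpperHalfPlane.qParam_tendsto_atImInfty zero_lt_one).mul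
    (tendsto_thetaProd_pow_eight.comp tendsto_coe_atImInfty)
  rw [zero_mul] at h
  refine h.congr fun τ ↦ ?_
  simp only [Function.comp_apply, Function.Periodic.qParam, ← mul_assoc, ← Complex.exp_add]
  simp

/-- The eighth power of the product of the theta constants, as a cusp form of level one. -/
noncomputable def thetaProdCuspForm : CuspForm 𝒮ℒ 12 where
  toFun τ := thetaProd τ ^ 8
  slash_action_eq' A hA := by
    obtain ⟨A, rfl⟩ := hA
    exact SlashInvariantForm.slash_action_generators_SL2Z slash_S_thetaProd_pow_eight slash_T_thetaProd_pow_eight A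
  holo' := by
    rw [UpperHalfPlane.mdifferentiable_iff]
    refine .congr (fun z hz ↦ ((differentiableAt_thetaProd hz).pow 8).differentiableWithinAt)
      fun z hz ↦ ?_
    simp [ofComplex_apply_of_im_pos hz]
  zero_at_cusps' hc := by
    rw [Subgroup.IsArithmetic.isCusp_iff_isCusp_SL2Z] at hc
    rw [OnePoint.isZeroAt_iff_forall_SL2Z hc]
    intro γ _
    rw [SlashInvariantForm.slash_action_generators_SL2Z slash_S_thetaProd_pow_eight slash_T_thetaProd_pow_eight]
    exact isZeroAtImInfty_thetaProd_pow_eight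

lemma exists_thetaProd_pow_eight_eq : ∃ c : ℂ, c ≠ 0 ∧
    ∀ τ : ℂ, 0 < τ.im → thetaProd τ ^ 8 = c * ModularForm.eta τ ^ 24 := by
  obtain ⟨c, hc⟩ := CuspForm.exists_smul_discriminant_of_weight_eq_twelve thetaProdCuspForm
  have h (τ : ℂ) (hτ : 0 < τ.im) : thetaProd τ ^ 8 = c * ModularForm.eta τ ^ 24 :=
    (DFunLike.congr_fun hc (⟨τ, hτ⟩ : ℍ)).symm
  refine ⟨c, ?_, h⟩
  rintro rfl
  have h256 : (256 : ℂ) = 0 := by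
    refine tendsto_nhds_unique (tendsto_thetaProd_pow_eight.comp tendsto_coe_atImInfty)
      (tendsto_const_nhds.congr fun τ ↦ ?_)
    simp [h τ τ.2]
  norm_num at h256

lemma thetaProd_ne_zero {τ : ℂ} (hτ : 0 < τ.im) : thetaProd τ ≠ 0 := by
  obtain ⟨c, hc, h⟩ := exists_thetaProd_pow_eight_eq
  have : thetaProd τ ^ 8 ≠ 0 := by
    rw [h τ hτ]
    exact mul_ne_zero hc (pow_ne_zero _ (ModularForm.eta_ne_zero hτ))
  exact pow_ne_zero_iff (by norm_num) |>.mp this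

lemma logDeriv_thetaProd {τ : ℂ} (hτ : 0 < τ.im) :
    logDeriv thetaProd τ = 3 * logDeriv ModularForm.eta τ := by
  obtain ⟨c, hc, h⟩ := exists_thetaProd_pow_eight_eq
  have heq : (fun z ↦ thetaProd z ^ 8) =ᶠ[𝓝 τ] fun z ↦ c * ModularForm.eta z ^ 24 := by
    filter_upwards [isOpen_upperHalfPlaneSet.mem_nhds hτ] with z hz using h z hz
  have hd := (logDeriv_congr_nhds heq).eq_of_nhds
  rw [logDeriv_fun_pow (differentiableAt_thetaProd hτ), logDeriv_const_mul _ _ hc,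
    logDeriv_fun_pow (ModularForm.differentiableAt_eta_of_mem_upperHalfPlaneSet hτ)] at hd
  push_cast at hd
  linear_combination hd / 8

end EtaQuotient

section ThetaLogDeriv

open Filter Topology

lemma thetaTwo_ne_zero {τ : ℂ} (hτ : 0 < τ.im) : thetaTwo τ ≠ 0 :=
  left_ne_zero_of_mul (left_ne_zero_of_mul (thetaProd_ne_zero hτ))

lemma thetaThree_ne_zero {τ : ℂ} (hτ : 0 < τ.im) : thetaThree τ ≠ 0 :=
  right_ne_zero_of_mul (left_ne_zero_of_mul (thetaProd_ne_zero hτ))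

lemma thetaFour_ne_zero {τ : ℂ} (hτ : 0 < τ.im) : thetaFour τ ≠ 0 :=
  right_ne_zero_of_mul (thetaProd_ne_zero hτ)

lemma two_mul_im_pos {τ : ℂ} (hτ : 0 < τ.im) : 0 < (2 * τ).im := by simpa using hτ

lemma logDeriv_comp_mul_left (f : ℂ → ℂ) (c τ : ℂ) :
    logDeriv (fun z ↦ f (c * z)) τ = c * logDeriv f (c * τ) := by
  rw [logDeriv_apply, logDeriv_apply, deriv_comp_mul_left, smul_eq_mul, mul_div_assoc]

lemma eventuallyEq_of_forall_im_pos {f g : ℂ → ℂ} (h : ∀ z : ℂ, 0 < z.im → f z = g z) {τ : ℂ}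
    (hτ : 0 < τ.im) : f =ᶠ[𝓝 τ] g := by
  filter_upwards [UpperHalfPlane.isOpen_upperHalfPlaneSet.mem_nhds hτ] with z hz using h z hz

lemma logDeriv_eq_of_forall_im_pos {f g : ℂ → ℂ} (h : ∀ z : ℂ, 0 < z.im → f z = g z) {τ : ℂ}
    (hτ : 0 < τ.im) : logDeriv f τ = logDeriv g τ :=
  (logDeriv_congr_nhds (eventuallyEq_of_forall_im_pos h hτ)).eq_of_nhds

lemma thetaFour_cube_mul_thetaProd {τ : ℂ} (hτ : 0 < τ.im) :
    thetaFour (2 * τ) ^ 3 * (2 * thetaProd (2 * τ)) = thetaProd τ ^ 2 := by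
  simp only [thetaProd]
  linear_combination -thetaFour (2 * τ) ^ 4 * thetaTwo_sq hτ - thetaTwo τ ^ 2 *
    (thetaThree τ * thetaFour τ + thetaFour (2 * τ) ^ 2) * thetaThree_mul_thetaFour hτ

lemma thetaTwo_cube_mul_thetaProd {τ : ℂ} (hτ : 0 < τ.im) :
    thetaTwo τ ^ 3 * thetaProd τ = 4 * thetaProd (2 * τ) ^ 2 := by
  simp only [thetaProd]
  linear_combination thetaTwo τ ^ 4 * thetaThree_mul_thetaFour hτ + thetaFour (2 * τ) ^ 2 *
    (thetaTwo τ ^ 2 + 2 * thetaTwo (2 * τ) * thetaThree (2 * τ)) * thetaTwo_sq hτ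

lemma logDeriv_thetaFour_two_mul {τ : ℂ} (hτ : 0 < τ.im) :
    logDeriv thetaFour (2 * τ) =
      logDeriv ModularForm.eta τ - logDeriv ModularForm.eta (2 * τ) := by
  have h2 := two_mul_im_pos hτ
  have h4 : DifferentiableAt ℂ (fun z ↦ thetaFour (2 * z)) τ :=
    (differentiableAt_thetaFour h2).comp τ (by fun_prop)
  have hP : DifferentiableAt ℂ (fun z ↦ thetaProd (2 * z)) τ :=
    (differentiableAt_thetaProd h2).comp τ (by fun_prop)
  have h := logDeriv_eq_of_forall_im_pos (fun _ ↦ thetaFour_cube_mul_thetaProd) hτ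
  rw [logDeriv_mul τ (by exact pow_ne_zero 3 (thetaFour_ne_zero h2))
      (by exact mul_ne_zero two_ne_zero (thetaProd_ne_zero h2)) (h4.fun_pow 3) (hP.const_mul 2),
    logDeriv_fun_pow h4, logDeriv_const_mul _ _ two_ne_zero,
    logDeriv_fun_pow (differentiableAt_thetaProd hτ), logDeriv_comp_mul_left,
    logDeriv_comp_mul_left, logDeriv_thetaProd hτ, logDeriv_thetaProd h2] at h
  push_cast at h
  linear_combination h / 6

lemma logDeriv_thetaTwo {τ : ℂ} (hτ : 0 < τ.im) :
    logDeriv thetaTwo τ =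
      4 * logDeriv ModularForm.eta (2 * τ) - logDeriv ModularForm.eta τ := by
  have h2 := two_mul_im_pos hτ
  have hP : DifferentiableAt ℂ (fun z ↦ thetaProd (2 * z)) τ :=
    (differentiableAt_thetaProd h2).comp τ (by fun_prop)
  have h := logDeriv_eq_of_forall_im_pos (fun _ ↦ thetaTwo_cube_mul_thetaProd) hτ
  rw [logDeriv_mul τ (by exact pow_ne_zero 3 (thetaTwo_ne_zero hτ)) (thetaProd_ne_zero hτ)
      ((differentiableAt_thetaTwo hτ).fun_pow 3) (differentiableAt_thetaProd hτ),
    logDeriv_fun_pow (differentiableAt_thetaTwo hτ), logDeriv_const_mul _ _ (by norm_num : (4 : ℂ) ≠ 0),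
    logDeriv_fun_pow hP, logDeriv_comp_mul_left, logDeriv_thetaProd hτ, logDeriv_thetaProd h2] at h
  push_cast at h
  linear_combination h / 3

lemma logDeriv_thetaThree {τ : ℂ} (hτ : 0 < τ.im) :
    logDeriv thetaThree τ =
      3 * logDeriv ModularForm.eta τ - logDeriv thetaTwo τ - logDeriv thetaFour τ := by
  have h := logDeriv_thetaProd hτ
  unfold thetaProd at h
  rw [logDeriv_mul τ (by exact mul_ne_zero (thetaTwo_ne_zero hτ) (thetaThree_ne_zero hτ))
      (thetaFour_ne_zero hτ) ((differentiableAt_thetaTwo hτ).fun_mul (differentiableAt_thetaThree hτ))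
      (differentiableAt_thetaFour hτ),
    logDeriv_mul τ (thetaTwo_ne_zero hτ) (thetaThree_ne_zero hτ) (differentiableAt_thetaTwo hτ)
      (differentiableAt_thetaThree hτ)] at h
  linear_combination h

lemma logDeriv_thetaTwo_eq_add {τ : ℂ} (hτ : 0 < τ.im) :
    logDeriv thetaTwo τ = logDeriv thetaTwo (2 * τ) + logDeriv thetaThree (2 * τ) := by
  have h2 := two_mul_im_pos hτ
  have hb : DifferentiableAt ℂ (fun z ↦ thetaTwo (2 * z)) τ :=
    (differentiableAt_thetaTwo h2).comp τ (by fun_prop)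
  have ha : DifferentiableAt ℂ (fun z ↦ thetaThree (2 * z)) τ :=
    (differentiableAt_thetaThree h2).comp τ (by fun_prop)
  have h := logDeriv_eq_of_forall_im_pos (fun _ ↦ thetaTwo_sq) hτ
  rw [logDeriv_fun_pow (differentiableAt_thetaTwo hτ),
    logDeriv_mul τ (by exact mul_ne_zero two_ne_zero (thetaTwo_ne_zero h2))
      (by exact thetaThree_ne_zero h2) (hb.const_mul 2) ha,
    logDeriv_const_mul _ _ two_ne_zero, logDeriv_comp_mul_left, logDeriv_comp_mul_left] at h
  push_cast at h
  linear_combination h / 2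

lemma mul_logDeriv_eq_deriv {f : ℂ → ℂ} {τ : ℂ} (h0 : f τ ≠ 0) :
    f τ * logDeriv f τ = deriv f τ := by
  rw [logDeriv_apply, mul_div_cancel₀ _ h0]

lemma hasDerivAt_sq_comp_two_mul {f : ℂ → ℂ} {τ : ℂ} (hf : DifferentiableAt ℂ f (2 * τ))
    (h0 : f (2 * τ) ≠ 0) :
    HasDerivAt (fun z ↦ f (2 * z) ^ 2) (4 * f (2 * τ) ^ 2 * logDeriv f (2 * τ)) τ := by
  have h : HasDerivAt (fun z ↦ f (2 * z)) (deriv f (2 * τ) * (2 * 1)) τ :=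
    hf.hasDerivAt.comp τ ((hasDerivAt_id τ).const_mul 2)
  convert! h.fun_pow 2 using 1
  rw [← mul_logDeriv_eq_deriv h0]
  push_cast
  ring

lemma hasDerivAt_sq {f : ℂ → ℂ} {τ : ℂ} (hf : DifferentiableAt ℂ f τ) (h0 : f τ ≠ 0) :
    HasDerivAt (fun z ↦ f z ^ 2) (2 * f τ ^ 2 * logDeriv f τ) τ := by
  convert! hf.hasDerivAt.fun_pow 2 using 1
  rw [← mul_logDeriv_eq_deriv h0]
  push_cast
  ring

lemma thetaThree_sq_mul_logDeriv {τ : ℂ} (hτ : 0 < τ.im) :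
    thetaThree τ ^ 2 * logDeriv thetaThree τ =
      2 * (thetaThree (2 * τ) ^ 2 * logDeriv thetaThree (2 * τ) +
        thetaTwo (2 * τ) ^ 2 * logDeriv thetaTwo (2 * τ)) := by
  have h2 := two_mul_im_pos hτ
  have h := (hasDerivAt_sq (differentiableAt_thetaThree hτ) (thetaThree_ne_zero hτ)).unique
    (((hasDerivAt_sq_comp_two_mul (differentiableAt_thetaThree h2) (thetaThree_ne_zero h2)).add
      (hasDerivAt_sq_comp_two_mul (differentiableAt_thetaTwo h2)
        (thetaTwo_ne_zero h2))).congr_of_eventuallyEq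
          (eventuallyEq_of_forall_im_pos (fun _ ↦ thetaThree_sq) hτ))
  linear_combination h / 2

lemma thetaFour_sq_mul_logDeriv {τ : ℂ} (hτ : 0 < τ.im) :
    thetaFour τ ^ 2 * logDeriv thetaFour τ =
      2 * (thetaThree (2 * τ) ^ 2 * logDeriv thetaThree (2 * τ) -
        thetaTwo (2 * τ) ^ 2 * logDeriv thetaTwo (2 * τ)) := by
  have h2 := two_mul_im_pos hτ
  have h := (hasDerivAt_sq (differentiableAt_thetaFour hτ) (thetaFour_ne_zero hτ)).unique
    (((hasDerivAt_sq_comp_two_mul (differentiableAt_thetaThree h2) (thetaThree_ne_zero h2)).sub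
      (hasDerivAt_sq_comp_two_mul (differentiableAt_thetaTwo h2)
        (thetaTwo_ne_zero h2))).congr_of_eventuallyEq
          (eventuallyEq_of_forall_im_pos (fun _ ↦ thetaFour_sq) hτ))
  linear_combination h / 2

/-- The ratio of `(log (θ₂ / θ₃))'` to `θ₄⁴`; it is the constant `πi/4`. -/
noncomputable def thetaLogRatio (τ : ℂ) : ℂ :=
  (logDeriv thetaTwo τ - logDeriv thetaThree τ) / thetaFour τ ^ 4

lemma thetaFour_two_mul_pow_four {τ : ℂ} (hτ : 0 < τ.im) :
    thetaFour (2 * τ) ^ 4 = thetaThree τ ^ 2 * thetaFour τ ^ 2 := by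
  rw [← mul_pow, thetaThree_mul_thetaFour hτ]
  ring

lemma thetaLogRatio_two_mul {τ : ℂ} (hτ : 0 < τ.im) :
    thetaLogRatio (2 * τ) = thetaLogRatio τ := by
  have h3 := thetaThree_ne_zero hτ
  have h4 := thetaFour_ne_zero hτ
  rw [thetaLogRatio, thetaLogRatio, thetaFour_two_mul_pow_four hτ]
  field_simp
  linear_combination
    thetaThree_sq_mul_logDeriv hτ - thetaThree τ ^ 2 * logDeriv_thetaTwo_eq_add hτ +
    (logDeriv thetaTwo (2 * τ) - logDeriv thetaThree (2 * τ)) * thetaFour_sq hτ -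
    (logDeriv thetaTwo (2 * τ) + logDeriv thetaThree (2 * τ)) * thetaThree_sq hτ

lemma logDeriv_thetaTwo_sub_thetaFour {τ : ℂ} (hτ : 0 < τ.im) :
    logDeriv thetaTwo τ - logDeriv thetaFour τ = thetaLogRatio τ * thetaThree τ ^ 4 := by
  have h3 := thetaThree_ne_zero hτ
  have h4 := thetaFour_ne_zero hτ
  rw [← thetaLogRatio_two_mul hτ, thetaLogRatio, thetaFour_two_mul_pow_four hτ]
  field_simp
  linear_combination
    -thetaFour_sq_mul_logDeriv hτ + thetaFour τ ^ 2 * logDeriv_thetaTwo_eq_add hτ -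
    (logDeriv thetaTwo (2 * τ) - logDeriv thetaThree (2 * τ)) * thetaThree_sq hτ +
    (logDeriv thetaTwo (2 * τ) + logDeriv thetaThree (2 * τ)) * thetaFour_sq hτ

lemma logDeriv_thetaTwo_sub_thetaThree {τ : ℂ} (hτ : 0 < τ.im) :
    logDeriv thetaTwo τ - logDeriv thetaThree τ = thetaLogRatio τ * thetaFour τ ^ 4 := by
  rw [thetaLogRatio, div_mul_cancel₀ _ (pow_ne_zero 4 (thetaFour_ne_zero hτ))]

end ThetaLogDeriv

section EisensteinEtaIdentities

open Filter Topology

lemma θ_eq_thetaThree (τ : ℂ) : θ τ = thetaThree (2 * τ) := by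
  refine tsum_congr fun n ↦ ?_
  rw [qq, jacobiTheta₂_term, ← Complex.exp_int_mul]
  push_cast
  ring_nf

lemma g₄_zero_eq {τ : ℂ} (hτ : 0 < τ.im) :
    g₄ 0 τ = thetaFour (2 * τ) ^ 2 - thetaTwo (2 * τ) ^ 2 := by
  have h := thetaFour_sq (two_mul_im_pos hτ)
  have h' := thetaThree_sq (two_mul_im_pos hτ)
  rw [g₄, θ_eq_thetaThree, θ_eq_thetaThree, Nat.cast_zero, add_zero,
    mul_div_cancel₀ τ (two_ne_zero' ℂ)]
  linear_combination -h - h' - thetaThree_sq hτ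

lemma g₄_one_eq {τ : ℂ} (hτ : 0 < τ.im) :
    g₄ 1 τ = thetaFour (2 * τ) ^ 2 + thetaTwo (2 * τ) ^ 2 := by
  have h := thetaFour_sq (two_mul_im_pos hτ)
  have h' := thetaThree_sq (two_mul_im_pos hτ)
  rw [g₄, θ_eq_thetaThree, θ_eq_thetaThree, Nat.cast_one, mul_div_cancel₀ _ (two_ne_zero' ℂ),
    thetaThree_add_one]
  linear_combination -h - h' - thetaFour_sq hτ

lemma η_eq_eta (τ : ℂ) : η τ = ModularForm.eta τ := by
  rw [η, ModularForm.eta, Function.Periodic.qParam]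
  congr 1
  · push_cast
    ring_nf
  · simp only [ModularForm.eta_q_eq_pow, qq]

lemma logDeriv_eta {τ : ℂ} (hτ : 0 < τ.im) :
    logDeriv ModularForm.eta τ = Real.pi * I / 12 * E₂ τ := by
  have h := ModularForm.logDeriv_eta_eq_E2 ⟨τ, hτ⟩
  rw [EisensteinSeries.E2_eq_tsum_cexp, tsum_pnat_eq_tsum_succ
    (f := fun n ↦ (ArithmeticFunction.sigma 1 n : ℂ) * cexp (2 * Real.pi * I * τ) ^ n)] at h
  rw [E₂]
  simpa [sigmaC, qq, ArithmeticFunction.sigma_apply] using! h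

lemma tendsto_qq : Tendsto qq (comap im atTop) (𝓝 0) := by
  rw [tendsto_zero_iff_norm_tendsto_zero]
  have h (τ : ℂ) : ‖qq τ‖ = Real.exp (-(2 * Real.pi) * τ.im) := by
    simp [qq, Complex.norm_exp]
  simp_rw [h]
  exact Real.tendsto_exp_atBot.comp
    (tendsto_comap.const_mul_atTop_of_neg (neg_lt_zero.mpr Real.two_pi_pos))

lemma norm_sigmaC_one_le (n : ℕ) : ‖sigmaC 1 n‖ ≤ (n : ℝ) ^ 2 := by
  calc ‖sigmaC 1 n‖ ≤ ∑ d ∈ n.divisors, ‖(d : ℂ) ^ 1‖ := norm_sum_le _ _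
    _ ≤ ∑ d ∈ n.divisors, (n : ℝ) := by
      refine Finset.sum_le_sum fun d hd ↦ ?_
      simpa using Nat.divisor_le hd
    _ ≤ (n : ℝ) ^ 2 := by
      rw [Finset.sum_const, nsmul_eq_mul, sq]
      gcongr
      exact Nat.card_divisors_le_self n

lemma tendsto_E₂ : Tendsto E₂ (comap im atTop) (𝓝 1) := by
  have hs : Summable fun n : ℕ ↦ (n : ℝ) ^ 2 * (1 / 2 : ℝ) ^ n :=
    summable_pow_mul_geometric_of_norm_lt_one 2 (by norm_num)
  have h : Tendsto (fun q : ℂ ↦ ∑' n : ℕ, sigmaC 1 (n + 1) * q ^ (n + 1)) (𝓝 0)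
      (𝓝 (∑' _ : ℕ, 0)) := by
    refine tendsto_tsum_of_dominated_convergence ((summable_nat_add_iff 1).mpr hs) (fun n ↦ ?_) ?_
    · simpa using (((continuous_pow (M := ℂ) (n + 1)).tendsto 0).const_mul (sigmaC 1 (n + 1)))
    · filter_upwards [Metric.ball_mem_nhds (0 : ℂ) (by norm_num : (0 : ℝ) < 1 / 2)] with q hq n
      rw [norm_mul, norm_pow]
      have := (mem_ball_zero_iff.mp hq).le
      gcongr
      exact norm_sigmaC_one_le (n + 1)
  rw [tsum_zero] at h
  simpa [E₂] using! ((h.comp tendsto_qq).const_mul 24).const_sub 1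

lemma tendsto_mul_comap_im {c : ℝ} (hc : 0 < c) :
    Tendsto (fun τ : ℂ ↦ c * τ) (comap im atTop) (comap im atTop) :=
  tendsto_comap_iff.mpr (by simpa [Function.comp_def] using tendsto_comap.const_mul_atTop hc)

lemma logDeriv_thetaTwo_sub_thetaFour_two_mul {τ : ℂ} (hτ : 0 < τ.im) :
    logDeriv thetaTwo (2 * τ) - logDeriv thetaFour (2 * τ) = Real.pi * I / 4 * E₄₂ τ := by
  have h2 := two_mul_im_pos hτ
  rw [logDeriv_thetaTwo h2, logDeriv_thetaFour_two_mul hτ, logDeriv_eta hτ, logDeriv_eta h2,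
    logDeriv_eta (two_mul_im_pos h2), E₄₂, ← mul_assoc 2 2,
    show (2 * 2 : ℂ) = 4 by norm_num]
  ring

lemma tendsto_thetaLogRatio :
    Tendsto (fun τ ↦ thetaLogRatio (2 * τ)) (comap im atTop) (𝓝 (Real.pi * I / 4)) := by
  have h3 := (tendsto_thetaThree.comp (tendsto_mul_comap_im two_pos)).pow 4
  have hE := (((tendsto_E₂.comp (tendsto_mul_comap_im four_pos)).const_mul 4).sub
    tendsto_E₂).div_const 3
  have h := (hE.const_mul (Real.pi * I / 4)).div h3 (by norm_num)
  norm_num at h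
  refine h.congr' ?_
  filter_upwards [tendsto_comap.eventually_gt_atTop 0] with τ hτ
  have h2 := two_mul_im_pos hτ
  have h0 := thetaThree_ne_zero h2
  have := logDeriv_thetaTwo_sub_thetaFour_two_mul hτ
  rw [logDeriv_thetaTwo_sub_thetaFour h2, E₄₂] at this
  simp only [Function.comp_apply, Pi.div_apply] at *
  field_simp at this ⊢
  linear_combination -this

lemma thetaLogRatio_eq {τ : ℂ} (hτ : 0 < τ.im) : thetaLogRatio τ = Real.pi * I / 4 := by
  have hpow (n : ℕ) : 0 < ((2 : ℂ) ^ n * τ).im ∧ thetaLogRatio (2 ^ n * τ) = thetaLogRatio τ := by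
    induction n with
    | zero => simpa using hτ
    | succ n ih =>
      rw [pow_succ', mul_assoc]
      exact ⟨two_mul_im_pos ih.1, (thetaLogRatio_two_mul ih.1).trans ih.2⟩
  have hlim : Tendsto (fun n : ℕ ↦ (2 : ℂ) ^ n * τ) atTop (comap im atTop) := by
    refine tendsto_comap_iff.mpr ?_
    have him (n : ℕ) : ((2 : ℂ) ^ n * τ).im = 2 ^ n * τ.im := by
      rw [show (2 : ℂ) ^ n = ((2 ^ n : ℝ) : ℂ) by push_cast; rfl, Complex.im_ofReal_mul]
    simp only [Function.comp_def, him]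
    exact (tendsto_pow_atTop_atTop_of_one_lt one_lt_two).atTop_mul_const hτ
  refine tendsto_nhds_unique (tendsto_const_nhds.congr fun n ↦ ?_)
    (tendsto_thetaLogRatio.comp hlim)
  rw [Function.comp_apply, thetaLogRatio_two_mul (hpow n).1, (hpow n).2]

lemma pi_mul_I_div_four_ne_zero : (Real.pi * I / 4 : ℂ) ≠ 0 := by
  simp [Real.pi_ne_zero]

lemma thetaThree_two_mul_pow_four {τ : ℂ} (hτ : 0 < τ.im) :
    thetaThree (2 * τ) ^ 4 = E₄₂ τ := by
  have h2 := two_mul_im_pos hτ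
  have h := logDeriv_thetaTwo_sub_thetaFour_two_mul hτ
  rw [logDeriv_thetaTwo_sub_thetaFour h2, thetaLogRatio_eq h2] at h
  exact mul_left_cancel₀ pi_mul_I_div_four_ne_zero h

lemma thetaFour_two_mul_pow_four_eq {τ : ℂ} (hτ : 0 < τ.im) :
    thetaFour (2 * τ) ^ 4 = (8 * E₂ (4 * τ) - 6 * E₂ (2 * τ) + E₂ τ) / 3 := by
  have h2 := two_mul_im_pos hτ
  have h := logDeriv_thetaTwo_sub_thetaThree h2
  rw [logDeriv_thetaThree h2, logDeriv_thetaTwo h2, logDeriv_thetaFour_two_mul hτ,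
    logDeriv_eta hτ, logDeriv_eta h2, logDeriv_eta (two_mul_im_pos h2), thetaLogRatio_eq h2,
    ← mul_assoc 2 2, show (2 * 2 : ℂ) = 4 by norm_num] at h
  refine mul_left_cancel₀ pi_mul_I_div_four_ne_zero ?_
  linear_combination -h

lemma tendsto_tprod_one_sub_qq_pow :
    Tendsto (fun τ ↦ ∏' n : ℕ, (1 - qq τ ^ (n + 1))) (comap im atTop) (𝓝 1) := by
  have h := (ModularForm.differentiableOn_tprod_one_sub_pow.differentiableAt
    (Metric.ball_mem_nhds (0 : ℂ) one_pos)).continuousAt.tendsto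
  simp only [ne_eq, Nat.add_eq_zero_iff, one_ne_zero, and_false, not_false_eq_true, zero_pow,
    sub_zero, tprod_one] at h
  exact h.comp tendsto_qq

lemma η_ne_zero {τ : ℂ} (hτ : 0 < τ.im) : η τ ≠ 0 := by
  rw [η_eq_eta]
  exact ModularForm.eta_ne_zero hτ

lemma differentiableAt_η {τ : ℂ} (hτ : 0 < τ.im) : DifferentiableAt ℂ η τ := by
  rw [funext η_eq_eta]
  exact ModularForm.differentiableAt_eta_of_mem_upperHalfPlaneSet hτ

lemma tendsto_thetaTwo_sq_mul_thetaFour_sq :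
    Tendsto (fun τ : ℂ ↦ cexp (-(Real.pi * I * τ)) * (thetaTwo (2 * τ) ^ 2 * thetaFour (2 * τ) ^ 2))
      (comap im atTop) (𝓝 4) := by
  have h2 := tendsto_mul_comap_im two_pos
  have h := ((tendsto_jacobiTheta₂_half.comp h2).pow 2).mul ((tendsto_thetaFour.comp h2).pow 2)
  norm_num at h
  refine h.congr fun τ ↦ ?_
  have he : cexp (Real.pi * I * (2 * τ) / 4) ^ 2 = cexp (Real.pi * I * τ) := by
    rw [← Complex.exp_nat_mul]
    push_cast
    ring_nf
  simp only [thetaTwo, mul_pow, he, Complex.exp_neg]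
  field_simp [Complex.exp_ne_zero]

lemma tendsto_η_quotient :
    Tendsto (fun τ : ℂ ↦ cexp (-(Real.pi * I * τ)) * (η τ * η (4 * τ) / η (2 * τ)) ^ 4)
      (comap im atTop) (𝓝 1) := by
  have hP := tendsto_tprod_one_sub_qq_pow
  have h := (((hP.mul (hP.comp (tendsto_mul_comap_im four_pos))).div
    (hP.comp (tendsto_mul_comap_im two_pos)) one_ne_zero)).pow 4
  norm_num at h
  refine h.congr fun τ ↦ ?_
  have he : cexp (Real.pi * I * τ) = (cexp (Real.pi * I * τ / 12) *
      cexp (Real.pi * I * (4 * τ) / 12) / cexp (Real.pi * I * (2 * τ) / 12)) ^ 4 := by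
    rw [← Complex.exp_add, ← Complex.exp_sub, ← Complex.exp_nat_mul]
    push_cast
    ring_nf
  rw [Complex.exp_neg, he, η, η, η]
  field_simp [Complex.exp_ne_zero]

lemma logDeriv_thetaTwo_sq_mul_thetaFour_sq {τ : ℂ} (hτ : 0 < τ.im) :
    logDeriv (fun z ↦ thetaTwo (2 * z) ^ 2 * thetaFour (2 * z) ^ 2) τ =
      logDeriv (fun z ↦ (η z * η (4 * z) / η (2 * z)) ^ 4) τ := by
  have h2 := two_mul_im_pos hτ
  have h4 : 0 < (4 * τ).im := by simpa using hτ
  have d2 : DifferentiableAt ℂ (fun z ↦ thetaTwo (2 * z)) τ :=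
    (differentiableAt_thetaTwo h2).comp τ (by fun_prop)
  have d4 : DifferentiableAt ℂ (fun z ↦ thetaFour (2 * z)) τ :=
    (differentiableAt_thetaFour h2).comp τ (by fun_prop)
  have e2 : DifferentiableAt ℂ (fun z ↦ η (2 * z)) τ :=
    (differentiableAt_η h2).comp τ (by fun_prop)
  have e4 : DifferentiableAt ℂ (fun z ↦ η (4 * z)) τ :=
    (differentiableAt_η h4).comp τ (by fun_prop)
  have e1 := differentiableAt_η hτ
  rw [logDeriv_mul τ (by exact pow_ne_zero 2 (thetaTwo_ne_zero h2))
      (by exact pow_ne_zero 2 (thetaFour_ne_zero h2)) (d2.fun_pow 2) (d4.fun_pow 2),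
    logDeriv_fun_pow d2, logDeriv_fun_pow d4,
    logDeriv_fun_pow ((e1.fun_mul e4).fun_div e2 (η_ne_zero h2)),
    logDeriv_div τ (by exact mul_ne_zero (η_ne_zero hτ) (η_ne_zero h4))
      (by exact η_ne_zero h2) (e1.fun_mul e4) e2,
    logDeriv_mul τ (by exact η_ne_zero hτ) (by exact η_ne_zero h4) e1 e4,
    logDeriv_comp_mul_left, logDeriv_comp_mul_left, logDeriv_comp_mul_left,
    logDeriv_comp_mul_left, logDeriv_thetaTwo h2, logDeriv_thetaFour_two_mul hτ, ← mul_assoc 2 2,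
    show (2 * 2 : ℂ) = 4 by norm_num, funext η_eq_eta]
  push_cast
  ring

lemma thetaTwo_sq_mul_thetaFour_sq {τ : ℂ} (hτ : 0 < τ.im) :
    thetaTwo (2 * τ) ^ 2 * thetaFour (2 * τ) ^ 2 = 4 * (η τ * η (4 * τ) / η (2 * τ)) ^ 4 := by
  have h4 {z : ℂ} (hz : 0 < z.im) : 0 < (4 * z).im := by simpa using hz
  obtain ⟨c, -, h⟩ := (logDeriv_eqOn_iff (s := UpperHalfPlane.upperHalfPlaneSet)
    (f := fun z ↦ thetaTwo (2 * z) ^ 2 * thetaFour (2 * z) ^ 2)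
    (g := fun z ↦ (η z * η (4 * z) / η (2 * z)) ^ 4)
    (fun z hz ↦ ((((differentiableAt_thetaTwo (two_mul_im_pos hz)).comp z (by fun_prop)).pow 2).mul
      (((differentiableAt_thetaFour (two_mul_im_pos hz)).comp z
        (by fun_prop)).pow 2)).differentiableWithinAt)
    (fun z hz ↦ ((((differentiableAt_η hz).mul
      ((differentiableAt_η (h4 hz)).comp z (by fun_prop))).div
      ((differentiableAt_η (two_mul_im_pos hz)).comp z (by fun_prop))
      (η_ne_zero (two_mul_im_pos hz))).pow 4).differentiableWithinAt)
    UpperHalfPlane.isOpen_upperHalfPlaneSet (convex_halfSpace_im_gt 0).isPreconnected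
    (fun z hz ↦ pow_ne_zero 4 (div_ne_zero (mul_ne_zero (η_ne_zero hz) (η_ne_zero (h4 hz)))
      (η_ne_zero (two_mul_im_pos hz))))
    (fun z hz ↦ mul_ne_zero (pow_ne_zero 2 (thetaTwo_ne_zero (two_mul_im_pos hz)))
      (pow_ne_zero 2 (thetaFour_ne_zero (two_mul_im_pos hz))))).mp
    (fun z hz ↦ logDeriv_thetaTwo_sq_mul_thetaFour_sq hz)
  replace h (z : ℂ) (hz : 0 < z.im) : thetaTwo (2 * z) ^ 2 * thetaFour (2 * z) ^ 2 =
      c * (η z * η (4 * z) / η (2 * z)) ^ 4 := h hz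
  have : (comap im atTop).NeBot :=
    comap_neBot_iff_frequently.mpr (Frequently.of_forall fun x ↦ ⟨⟨0, x⟩, rfl⟩)
  have hc : c * 1 = 4 := by
    refine tendsto_nhds_unique ((tendsto_η_quotient.const_mul c).congr' ?_) tendsto_thetaTwo_sq_mul_thetaFour_sq
    filter_upwards [tendsto_comap.eventually_gt_atTop 0] with z hz
    rw [h z hz]
    ring
  rw [h τ hτ, ← mul_one c, hc]

lemma thetaFour_sq_thetaTwo_sq_neg_one_div_four_mul {τ : ℂ} (hτ : 0 < τ.im) :
    thetaFour (2 * (-1 / (4 * τ))) ^ 2 = -(2 * I * τ) * thetaTwo (2 * τ) ^ 2 ∧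
    thetaTwo (2 * (-1 / (4 * τ))) ^ 2 = -(2 * I * τ) * thetaFour (2 * τ) ^ 2 := by
  have h2 := two_mul_im_pos hτ
  have h0 : τ ≠ 0 := by rintro rfl; simp at hτ
  rw [show 2 * (-1 / (4 * τ)) = -1 / (2 * τ) by field_simp; norm_num, thetaFour_neg_one_div h2,
    thetaTwo_neg_one_div h2, mul_pow, mul_pow, sqrt_neg_I_mul_sq]
  constructor <;> ring

end EisensteinEtaIdentities

theorem stmt19 :
    (∀ j : ℕ, j < 2 → ∀ τ : ℂ, 0 < τ.im →
      g₄ j τ ^ 2 = E₄₂ τ - (-1 : ℂ) ^ j * 8 * (η τ * η (4 * τ) / η (2 * τ)) ^ 4) ∧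
    (∀ τ : ℂ, 0 < τ.im → g₄ 0 τ * g₄ 1 τ = E₄₂' τ) ∧
    (∀ j : ℕ, j < 2 → ∀ τ : ℂ, 0 < τ.im →
      g₄ j (-1 / (4 * τ)) = (-1 : ℂ) ^ j * 2 * Complex.I * τ * g₄ j τ) := by
  have hcases {j : ℕ} (hj : j < 2) : j = 0 ∨ j = 1 := by omega
  refine ⟨fun j hj τ hτ ↦ ?_, fun τ hτ ↦ ?_, fun j hj τ hτ ↦ ?_⟩
  · have h4 := thetaThree_pow_four (two_mul_im_pos hτ)
    rw [thetaThree_two_mul_pow_four hτ] at h4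
    rcases hcases hj with rfl | rfl
    · rw [g₄_zero_eq hτ, h4]
      linear_combination -2 * thetaTwo_sq_mul_thetaFour_sq hτ
    · rw [g₄_one_eq hτ, h4]
      linear_combination 2 * thetaTwo_sq_mul_thetaFour_sq hτ
  · have h4 := thetaThree_pow_four (two_mul_im_pos hτ)
    rw [thetaThree_two_mul_pow_four hτ, E₄₂] at h4
    rw [g₄_zero_eq hτ, g₄_one_eq hτ, E₄₂']
    linear_combination 2 * thetaFour_two_mul_pow_four_eq hτ + h4
  · have hS : 0 < (-1 / (4 * τ)).im := by
      have h := UpperHalfPlane.im_inv_neg_coe_pos ⟨4 * τ, by simpa using hτ⟩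
      rwa [← neg_inv, ← one_div, ← neg_div] at h
    obtain ⟨h₁, h₂⟩ := thetaFour_sq_thetaTwo_sq_neg_one_div_four_mul hτ
    rcases hcases hj with rfl | rfl
    · rw [g₄_zero_eq hS, g₄_zero_eq hτ, h₁, h₂]
      ring
    · rw [g₄_one_eq hS, g₄_one_eq hτ, h₁, h₂]
      ring
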